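/- Let x⁰ ∈ H and δ > 0, let Λ ⊆ I, and suppose x⁰ is δ-clustered sparse in Φ with respect to Λ and Φ*x⁰ ∈ ℓ¹(I). Let n ∈ H_K satisfy ‖Φ*n‖₁ ≤ ε and set x̃ = P_K x⁰ + n. Let κ = κ(Λ, H_M) and assume κ < 1/2. If x̃⋆ ∈ H satisfies P_K x̃⋆ = x̃, Φ*x̃⋆ ∈ ℓ¹(I), and ‖Φ*x̃⋆‖₁ ≤ ‖Φ*x‖₁ for every x ∈ H with P_K x = x̃ and Φ*x ∈ ℓ¹(I), then ‖x̃⋆ − x⁰‖ ≤ (2δ + (3 + 2κ)ε)/(1 − 2κ). -/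

import Mathlib

noncomputable section

open scoped InnerProductSpace

/-- The ℓ¹ norm of a coefficient sequence restricted (by coordinatewise multiplication with the
indicator of `Λ`) to an index set `Λ`. -/
def l1On {I : Type*} (Λ : Set I) (c : I → ℂ) : ℝ :=
  ∑' i, Set.indicator Λ (fun i => ‖c i‖) i

/-- The ℓ¹ norm of a coefficient sequence. -/
def l1 {I : Type*} (c : I → ℂ) : ℝ := ∑' i, ‖c i‖

/-- The analysis coefficients of `x` with respect to the family `Φ`. -/
def analysisCoeff {H : Type*} [NormedAddCommGroup H] [InnerProductSpace ℂ H]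
    {I : Type*} (Φ : I → H) (x : H) : I → ℂ :=
  fun i => ⟪x, Φ i⟫_ℂ

/-- The concentration `κ(Λ, H_M)` of the index set `Λ` on the subspace `M`. -/
def concentration {H : Type*} [NormedAddCommGroup H] [InnerProductSpace ℂ H]
    {I : Type*} (Φ : I → H) (Λ : Set I) (M : Submodule ℂ H) : ℝ :=
  sSup {r : ℝ | ∃ f : H, f ∈ M ∧ f ≠ 0 ∧ (Summable fun i => ‖⟪f, Φ i⟫_ℂ‖) ∧
    r = l1On Λ (analysisCoeff Φ f) / l1 (analysisCoeff Φ f)}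

/-!
Put `z = x⁰ + n` and `f = x̃⋆ − z`. Both `x̃⋆` and `z` are feasible, so `f ∈ H_M`, and
`‖Φ*x̃⋆‖₁ ≤ ‖Φ*z‖₁` by minimality. Splitting both norms along `Λ` and `Λᶜ` gives the cone inequality
`‖Φ*f‖₁ ≤ 2‖1_Λ Φ*f‖₁ + 2‖1_{Λᶜ} Φ*z‖₁`. Since `f ∈ H_M`, the first term on the right is at most
`2κ‖Φ*f‖₁` and can be absorbed, while the second is at most `2(δ + ε)`. The frame inequality and
`ℓ¹ ⊆ ℓ²` turn this into a bound on `‖f‖`, and `x̃⋆ − x⁰ = f + n` costs another `ε`.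
-/

section L1

variable {I : Type*} {c d : I → ℂ}

lemma l1_nonneg (c : I → ℂ) : 0 ≤ l1 c :=
  tsum_nonneg fun _ ↦ norm_nonneg _

lemma l1On_nonneg (Λ : Set I) (c : I → ℂ) : 0 ≤ l1On Λ c :=
  tsum_nonneg fun _ ↦ Set.indicator_nonneg (fun _ _ ↦ norm_nonneg _) _

lemma l1On_add_l1On_compl (Λ : Set I) (hc : Summable c) : l1On Λ c + l1On Λᶜ c = l1 c := by
  rw [l1On, l1On, ← (hc.norm.indicator Λ).tsum_add (hc.norm.indicator Λᶜ)]
  exact tsum_congr fun i ↦ Set.indicator_self_add_compl_apply Λ _ i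

lemma l1On_le_l1 (Λ : Set I) (hc : Summable c) : l1On Λ c ≤ l1 c := by
  linarith [l1On_add_l1On_compl Λ hc, l1On_nonneg Λᶜ c]

lemma l1On_neg (Λ : Set I) (c : I → ℂ) : l1On Λ (-c) = l1On Λ c := by
  simp [l1On]

lemma l1On_add_le (Λ : Set I) (hc : Summable c) (hd : Summable d) :
    l1On Λ (c + d) ≤ l1On Λ c + l1On Λ d := by
  have hc' := hc.norm.indicator Λ
  have hd' := hd.norm.indicator Λ
  rw [l1On, l1On, l1On, ← hc'.tsum_add hd']
  refine ((hc.add hd).norm.indicator Λ).tsum_le_tsum (fun i ↦ ?_) (hc'.add hd')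
  calc Λ.indicator (fun i ↦ ‖(c + d) i‖) i
      ≤ Λ.indicator (fun i ↦ ‖c i‖ + ‖d i‖) i :=
        Set.indicator_le_indicator (norm_add_le (c i) (d i))
    _ = Λ.indicator (fun i ↦ ‖c i‖) i + Λ.indicator (fun i ↦ ‖d i‖) i := by
        rw [Set.indicator_add]

lemma l1On_sub_le (Λ : Set I) (hc : Summable c) (hd : Summable d) :
    l1On Λ (c - d) ≤ l1On Λ c + l1On Λ d := by
  rw [sub_eq_add_neg, ← l1On_neg Λ d]
  exact l1On_add_le Λ hc hd.neg

lemma l1_sub_le_of_l1_le (Λ : Set I) (hc : Summable c) (hd : Summable d) (hdc : l1 d ≤ l1 c) :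
    l1 (d - c) ≤ 2 * l1On Λ (d - c) + 2 * l1On Λᶜ c := by
  have hdiff : Summable (d - c) := hd.sub hc
  have h_on : l1On Λ c ≤ l1On Λ d + l1On Λ (d - c) := by
    simpa only [sub_sub_cancel] using l1On_sub_le Λ hd hdiff
  have h_off : l1On Λᶜ (d - c) ≤ l1On Λᶜ d + l1On Λᶜ c := l1On_sub_le Λᶜ hd hc
  linarith [l1On_add_l1On_compl Λ hc, l1On_add_l1On_compl Λ hd, l1On_add_l1On_compl Λ hdiff]

lemma tsum_norm_sq_le_l1_sq (hc : Summable c) : ∑' i, ‖c i‖ ^ 2 ≤ l1 c ^ 2 := by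
  have hterm (i : I) : ‖c i‖ ^ 2 ≤ l1 c * ‖c i‖ := by
    rw [sq]
    gcongr
    exact hc.norm.le_tsum i fun _ _ ↦ norm_nonneg _
  have hmul : Summable fun i ↦ l1 c * ‖c i‖ := hc.norm.mul_left _
  calc ∑' i, ‖c i‖ ^ 2
      ≤ ∑' i, l1 c * ‖c i‖ :=
        (hmul.of_nonneg_of_le (fun _ ↦ sq_nonneg _) hterm).tsum_le_tsum hterm hmul
    _ = l1 c ^ 2 := by rw [tsum_mul_left, sq, l1]

end L1

section Analysis

variable {H : Type*} [NormedAddCommGroup H] [InnerProductSpace ℂ H] {I : Type*} {Φ : I → H}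
  {M : Submodule ℂ H}

lemma analysisCoeff_add (Φ : I → H) (x y : H) :
    analysisCoeff Φ (x + y) = analysisCoeff Φ x + analysisCoeff Φ y :=
  funext fun _ ↦ inner_add_left _ _ _

lemma analysisCoeff_sub (Φ : I → H) (x y : H) :
    analysisCoeff Φ (x - y) = analysisCoeff Φ x - analysisCoeff Φ y :=
  funext fun _ ↦ inner_sub_left _ _ _

lemma sqrt_mul_norm_le_l1_analysisCoeff {A : ℝ} {x : H}
    (hA : A * ‖x‖ ^ 2 ≤ ∑' i, ‖analysisCoeff Φ x i‖ ^ 2) (hx : Summable (analysisCoeff Φ x)) :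
    √A * ‖x‖ ≤ l1 (analysisCoeff Φ x) := by
  calc √A * ‖x‖ = √(A * ‖x‖ ^ 2) := by
        rw [Real.sqrt_mul' A (sq_nonneg _), Real.sqrt_sq (norm_nonneg x)]
    _ ≤ l1 (analysisCoeff Φ x) :=
        Real.sqrt_le_iff.2 ⟨l1_nonneg _, hA.trans (tsum_norm_sq_le_l1_sq hx)⟩

lemma concentration_nonneg (Φ : I → H) (Λ : Set I) (M : Submodule ℂ H) :
    0 ≤ concentration Φ Λ M := by
  refine Real.sSup_nonneg ?_
  rintro _ ⟨f, -, -, -, rfl⟩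
  exact div_nonneg (l1On_nonneg _ _) (l1_nonneg _)

lemma l1On_analysisCoeff_le_concentration_mul {f : H} (Λ : Set I) (hfM : f ∈ M)
    (hf : Summable (analysisCoeff Φ f)) :
    l1On Λ (analysisCoeff Φ f) ≤ concentration Φ Λ M * l1 (analysisCoeff Φ f) := by
  obtain hzero | hpos := (l1_nonneg (analysisCoeff Φ f)).eq_or_lt
  · simpa only [← hzero, mul_zero] using l1On_le_l1 Λ hf
  · have hf0 : f ≠ 0 := by
      rintro rfl
      simp [l1, analysisCoeff] at hpos
    rw [← div_le_iff₀ hpos]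
    refine le_csSup ⟨1, ?_⟩ ⟨f, hfM, hf0, hf.norm, rfl⟩
    rintro _ ⟨g, -, -, hg, rfl⟩
    exact div_le_one_of_le₀ (l1On_le_l1 Λ hg.of_norm) (l1_nonneg _)

lemma one_sub_two_mul_concentration_mul_l1_sub_le {x z : H} (Λ : Set I) (hxz : x - z ∈ M)
    (hx : Summable (analysisCoeff Φ x)) (hz : Summable (analysisCoeff Φ z))
    (hle : l1 (analysisCoeff Φ x) ≤ l1 (analysisCoeff Φ z)) :
    (1 - 2 * concentration Φ Λ M) * l1 (analysisCoeff Φ (x - z)) ≤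
      2 * l1On Λᶜ (analysisCoeff Φ z) := by
  have hsub : Summable (analysisCoeff Φ (x - z)) := analysisCoeff_sub Φ x z ▸ hx.sub hz
  have hcone := l1_sub_le_of_l1_le Λ hz hx hle
  rw [← analysisCoeff_sub] at hcone
  linarith [l1On_analysisCoeff_le_concentration_mul Λ hxz hsub]

end Analysis

lemma starProjection_eq_starProjection_iff_sub_mem_orthogonal {𝕜 E : Type*} [RCLike 𝕜]
    [NormedAddCommGroup E] [InnerProductSpace 𝕜 E] {K : Submodule 𝕜 E}
    [K.HasOrthogonalProjection] {x y : E} :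
    K.starProjection x = K.starProjection y ↔ x - y ∈ Kᗮ := by
  rw [← K.starProjection_apply_eq_zero_iff, map_sub, sub_eq_zero]

/-- The constraint `P_K x̃⋆ = x̃` says that `xstar` and `x0 + n` agree modulo `M`. Summability in
`ℂ` is absolute, so `Summable (analysisCoeff Φ x)` says that `Φ*x ∈ ℓ¹(I)`. A divergent `∑'` is `0`,
so for `A > 0` the lower frame bound `hA` also forces `Φ*x ∈ ℓ²(I)`. -/
theorem l1_inpainting_error_noisy_general
    {H : Type*} [NormedAddCommGroup H] [InnerProductSpace ℂ H] {I : Type*} {Φ : I → H}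
    {A : NNReal}
    (hA : ∀ x : H, A * ‖x‖ ^ 2 ≤ ∑' i, ‖analysisCoeff Φ x i‖ ^ 2)
    {M : Submodule ℂ H} {Λ : Set I} {x0 n xstar : H} {δ ε : ℝ}
    (hx0sum : Summable (analysisCoeff Φ x0)) (hsparse : l1On Λᶜ (analysisCoeff Φ x0) ≤ δ)
    (hnsum : Summable (analysisCoeff Φ n)) (hnε : l1 (analysisCoeff Φ n) ≤ ε)
    (hκ : concentration Φ Λ M < 1 / 2) (hfeas : xstar - (x0 + n) ∈ M)
    (hstarsum : Summable (analysisCoeff Φ xstar))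
    (hmin : l1 (analysisCoeff Φ xstar) ≤ l1 (analysisCoeff Φ (x0 + n))) :
    √A * ‖xstar - x0‖ ≤
      (2 * δ + (3 - 2 * concentration Φ Λ M) * ε) / (1 - 2 * concentration Φ Λ M) := by
  set κ := concentration Φ Λ M
  set f := xstar - (x0 + n) with hf
  have hzsum : Summable (analysisCoeff Φ (x0 + n)) := analysisCoeff_add Φ x0 n ▸ hx0sum.add hnsum
  have hfsum : Summable (analysisCoeff Φ f) := analysisCoeff_sub Φ _ _ ▸ hstarsum.sub hzsum
  have hoff : l1On Λᶜ (analysisCoeff Φ (x0 + n)) ≤ δ + ε := by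
    rw [analysisCoeff_add]
    linarith [l1On_add_le Λᶜ hx0sum hnsum, l1On_le_l1 Λᶜ hnsum]
  have hκpos : 0 < 1 - 2 * κ := by linarith
  have hfl1 : l1 (analysisCoeff Φ f) ≤ 2 * (δ + ε) / (1 - 2 * κ) := by
    rw [le_div_iff₀' hκpos]
    linarith [one_sub_two_mul_concentration_mul_l1_sub_le Λ hfeas hstarsum hzsum hmin]
  calc √A * ‖xstar - x0‖ = √A * ‖f + n‖ := by rw [hf, sub_add_eq_sub_sub, sub_add_cancel]
    _ ≤ √A * ‖f‖ + √A * ‖n‖ := by rw [← mul_add]; gcongr; exact norm_add_le f n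
    _ ≤ l1 (analysisCoeff Φ f) + l1 (analysisCoeff Φ n) :=
        add_le_add (sqrt_mul_norm_le_l1_analysisCoeff (hA f) hfsum)
          (sqrt_mul_norm_le_l1_analysisCoeff (hA n) hnsum)
    _ ≤ 2 * (δ + ε) / (1 - 2 * κ) + ε := add_le_add hfl1 hnε
    _ = (2 * δ + (3 - 2 * κ) * ε) / (1 - 2 * κ) := by field_simp; ring

/-- Error bound for analysis-side ℓ¹ minimization inpainting with noise: if `x⁰` is
`δ`-clustered sparse with respect to `Λ`, the data is `x̃ = P_K x⁰ + n` with `‖Φ* n‖₁ ≤ ε`,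
and the concentration `κ` of `Λ` on the missing subspace satisfies `κ < 1/2`, then any
minimizer `x̃⋆` of the analysis ℓ¹ norm subject to `P_K x̃⋆ = x̃` satisfies
`‖x̃⋆ − x⁰‖ ≤ (2δ + (3 + 2κ)ε)/(1 − 2κ)`. -/
theorem l1_inpainting_error_noisy
    {H : Type*} [NormedAddCommGroup H] [InnerProductSpace ℂ H] [CompleteSpace H]
    {I : Type*} [Countable I] (Φ : I → H)
    (hPars : ∀ x : H, HasSum (fun i => ‖⟪x, Φ i⟫_ℂ‖ ^ 2) (‖x‖ ^ 2))
    (M : Submodule ℂ H) [CompleteSpace M]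
    (x0 : H) (δ : ℝ) (hδ : 0 < δ) (Λ : Set I)
    (hx0sum : Summable fun i => ‖⟪x0, Φ i⟫_ℂ‖)
    (hsparse : l1On Λᶜ (analysisCoeff Φ x0) ≤ δ)
    (ε : ℝ) (n : H) (hn : n ∈ Mᗮ)
    (hnsum : Summable fun i => ‖⟪n, Φ i⟫_ℂ‖)
    (hnε : l1 (analysisCoeff Φ n) ≤ ε)
    (xt : H) (hxt : xt = (Submodule.orthogonalProjectionOnto Mᗮ x0 : H) + n)
    (κ : ℝ) (hκdef : κ = concentration Φ Λ M) (hκ : κ < 1 / 2)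
    (xstar : H)
    (hfeas : (Submodule.orthogonalProjectionOnto Mᗮ xstar : H) = xt)
    (hstarsum : Summable fun i => ‖⟪xstar, Φ i⟫_ℂ‖)
    (hmin : ∀ x : H, (Submodule.orthogonalProjectionOnto Mᗮ x : H) = xt →
      (Summable fun i => ‖⟪x, Φ i⟫_ℂ‖) →
      l1 (analysisCoeff Φ xstar) ≤ l1 (analysisCoeff Φ x)) :
    ‖xstar - x0‖ ≤ (2 * δ + (3 + 2 * κ) * ε) / (1 - 2 * κ) := by
  subst hxt hκdef
  have hz : Mᗮ.starProjection (x0 + n) = Mᗮ.starProjection x0 + n := by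
    rw [map_add, Submodule.starProjection_eq_self_iff.2 hn]
  have hzsum : Summable (analysisCoeff Φ (x0 + n)) :=
    analysisCoeff_add Φ x0 n ▸ hx0sum.of_norm.add hnsum.of_norm
  have hsub : xstar - (x0 + n) ∈ M := by
    rw [← M.orthogonal_orthogonal, ← starProjection_eq_starProjection_iff_sub_mem_orthogonal]
    exact hfeas.trans hz.symm
  have hε : 0 ≤ ε := (l1_nonneg _).trans hnε
  calc ‖xstar - x0‖
      ≤ (2 * δ + (3 - 2 * concentration Φ Λ M) * ε) / (1 - 2 * concentration Φ Λ M) := by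
        simpa using l1_inpainting_error_noisy_general (A := 1)
          (fun x ↦ by simpa [analysisCoeff] using (hPars x).tsum_eq.ge)
          hx0sum.of_norm hsparse hnsum.of_norm hnε hκ hsub hstarsum.of_norm (hmin _ hz hzsum.norm)
    _ ≤ (2 * δ + (3 + 2 * concentration Φ Λ M) * ε) / (1 - 2 * concentration Φ Λ M) := by
        have hκ0 := concentration_nonneg Φ Λ M
        gcongr <;> linarith
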